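/- A polynomial p ∈ ℂ[x₀,x₁,x₂,x₃,x₄] satisfies σ_t p = p for all t ∈ ℂ if and only if p lies in the ℂ-subalgebra generated by the five polynomials x₀, x₀x₂ − x₁², x₂² + (1/3)x₀x₄ − (4/3)x₁x₃, x₁³ + (1/2)x₀²x₃ − (3/2)x₀x₁x₂, and x₂³ − 2x₁x₂x₃ + x₀x₃² + x₁²x₄ − x₀x₂x₄; that is, the subalgebra of σ-invariants equals the Algebra.adjoin of these five elements. -/

import Mathlib

/-!
Invariance of the five generators is a direct computation. For the converse, write `H`, `I`, `T`,
`J` for the generators other than `x₀`, and `A` for the subalgebra they all generate.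

* Slice argument (`exists_pow_mul_mem`): where `x₀ ≠ 0`, the choice `t = -x₁/x₀` moves a point to
  `(x₀, 0, H/x₀, 2T/x₀², (3x₀²I - 3H²)/x₀³)`. Hence an invariant `p` satisfies `x₀ᴺ p ∈ A` for
  some `N`.
* Saturation (`mem_of_X_zero_mul_mem`): if `x₀ p ∈ A` then `p ∈ A`. By the syzygy
  `T² + H³ = ¾ x₀² H I + ¼ x₀³ J`, every element of `A` is `x₀ a + f(H,I,J) + T g(H,I,J)` with
  `a ∈ A` (`exists_normal_form`). On the hyperplane `x₀ = 0` one has `H = -x₁²`, `T = x₁³`, and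
  `(x₁, I, J)` takes every value with nonzero first coordinate; comparing `x₁` with `-x₁` shows
  that an element of `A` divisible by `x₀` has `f = g = 0`.

Cancelling the powers of `x₀` one at a time gives `p ∈ A`.
-/

open MvPolynomial

/-- The `ℂ`-algebra endomorphism of `ℂ[x₀,x₁,x₂,x₃,x₄]` given by `σ_t(x₀) = x₀`,
`σ_t(x₁) = x₁ + t·x₀`, `σ_t(x₂) = x₂ + 2t·x₁ + t²·x₀`,
`σ_t(x₃) = x₃ + 3t·x₂ + 3t²·x₁ + t³·x₀`,
`σ_t(x₄) = x₄ + 4t·x₃ + 6t²·x₂ + 4t³·x₁ + t⁴·x₀` (the `ℂ⁺`-action on `Sym⁴(ℂ²)`). -/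
noncomputable def sigma (t : ℂ) :
    MvPolynomial (Fin 5) ℂ →ₐ[ℂ] MvPolynomial (Fin 5) ℂ :=
  aeval ![X 0,
          X 1 + C t * X 0,
          X 2 + C (2 * t) * X 1 + C (t ^ 2) * X 0,
          X 3 + C (3 * t) * X 2 + C (3 * t ^ 2) * X 1 + C (t ^ 3) * X 0,
          X 4 + C (4 * t) * X 3 + C (6 * t ^ 2) * X 2 + C (4 * t ^ 3) * X 1 + C (t ^ 4) * X 0]

/-- The polynomial ring `ℂ[x₀,x₁,x₂,x₃,x₄]`. -/
abbrev Poly5 : Type := MvPolynomial (Fin 5) ℂ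

/-- The leading coefficient of the Hessian covariant of the quartic. -/
noncomputable def genH : Poly5 := X 0 * X 2 - X 1 ^ 2

/-- One third of the quadratic invariant of the quartic. -/
noncomputable def genI : Poly5 := X 2 ^ 2 + C (1 / 3 : ℂ) * X 0 * X 4 - C (4 / 3 : ℂ) * X 1 * X 3

/-- The leading coefficient of the sextic covariant of the quartic, up to a scalar factor. -/
noncomputable def genT : Poly5 :=
  X 1 ^ 3 + C (1 / 2 : ℂ) * X 0 ^ 2 * X 3 - C (3 / 2 : ℂ) * X 0 * X 1 * X 2

/-- The cubic invariant (catalecticant) of the quartic, up to sign. -/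
noncomputable def genJ : Poly5 :=
  X 2 ^ 3 - C (2 : ℂ) * X 1 * X 2 * X 3 + X 0 * X 3 ^ 2 + X 1 ^ 2 * X 4 - X 0 * X 2 * X 4

/-- The subalgebra generated by the five basic invariants. -/
noncomputable def invAlg : Subalgebra ℂ Poly5 :=
  Algebra.adjoin ℂ ({X 0, genH, genI, genT, genJ} : Set Poly5)

lemma X_zero_mem : (X 0 : Poly5) ∈ invAlg := Algebra.subset_adjoin (by simp)

lemma genH_mem : genH ∈ invAlg := Algebra.subset_adjoin (by simp)

lemma genI_mem : genI ∈ invAlg := Algebra.subset_adjoin (by simp)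

lemma genT_mem : genT ∈ invAlg := Algebra.subset_adjoin (by simp)

lemma genJ_mem : genJ ∈ invAlg := Algebra.subset_adjoin (by simp)

lemma C_mem_invAlg (c : ℂ) : (C c : Poly5) ∈ invAlg := invAlg.algebraMap_mem c

lemma eval_aeval_eq {m n : ℕ} (g : Fin m → MvPolynomial (Fin n) ℂ) (x : Fin n → ℂ)
    (p : MvPolynomial (Fin m) ℂ) :
    eval x (aeval g p) = eval (fun i => eval x (g i)) p := by
  induction p using MvPolynomial.induction_on with
  | C a => simp
  | add p q hp hq => rw [map_add, map_add, map_add, hp, hq]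
  | mul_X p i hp => rw [map_mul, map_mul, map_mul, hp, aeval_X, eval_X]

/-- A polynomial vanishing wherever the zeroth coordinate is nonzero is zero. -/
lemma eq_zero_of_eval_ne {n : ℕ} (p : MvPolynomial (Fin (n + 1)) ℂ)
    (h : ∀ x : Fin (n + 1) → ℂ, x 0 ≠ 0 → eval x p = 0) : p = 0 := by
  have h0 : X 0 * p = 0 := by
    apply MvPolynomial.funext
    intro x
    by_cases hx : x 0 = 0
    · simp [hx]
    · simp [h x hx]
  exact (mul_eq_zero.mp h0).resolve_left (X_ne_zero 0)

lemma sigma_eq_of_mem {p : Poly5} (hp : p ∈ invAlg) (t : ℂ) : sigma t p = p := by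
  have hle : invAlg ≤ AlgHom.equalizer (sigma t) (AlgHom.id ℂ Poly5) := by
    refine Algebra.adjoin_le ?_
    intro q hq
    simp only [Set.mem_insert_iff, Set.mem_singleton_iff] at hq
    change sigma t q = q
    apply MvPolynomial.funext
    intro x
    rw [sigma, eval_aeval_eq]
    rcases hq with rfl | rfl | rfl | rfl | rfl <;>
      simp [genH, genI, genT, genJ] <;> ring
  exact hle hp

/-- The point of the slice `x₁ = 0` in the orbit of `x`, meaningful when `x 0 ≠ 0`. -/
noncomputable def slicePt (x : Fin 5 → ℂ) : Fin 5 → ℂ :=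
  ![x 0, 0, eval x genH / x 0, 2 * eval x genT / x 0 ^ 2,
    (3 * x 0 ^ 2 * eval x genI - 3 * eval x genH ^ 2) / x 0 ^ 3]

lemma eval_slicePt_of_invariant {p : Poly5} (hp : ∀ t : ℂ, sigma t p = p) (x : Fin 5 → ℂ)
    (hx : x 0 ≠ 0) : eval (slicePt x) p = eval x p := by
  conv_rhs => rw [← hp (-x 1 / x 0), sigma, eval_aeval_eq]
  congr 2
  funext i
  fin_cases i <;> simp [slicePt, genH, genI, genT] <;> field_simp <;> ring

/-- For an arbitrary polynomial `p`, restriction to the slice becomes an element of `invAlg`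
after clearing the denominators, which are powers of `x₀`. -/
lemma exists_clear_denominators (p : Poly5) : ∃ N : ℕ, ∃ q ∈ invAlg,
    ∀ x : Fin 5 → ℂ, x 0 ≠ 0 → x 0 ^ N * eval (slicePt x) p = eval x q := by
  induction p using MvPolynomial.induction_on with
  | C a => exact ⟨0, C a, C_mem_invAlg a, by simp⟩
  | add p₁ p₂ h₁ h₂ =>
    obtain ⟨N₁, q₁, hq₁, e₁⟩ := h₁
    obtain ⟨N₂, q₂, hq₂, e₂⟩ := h₂
    refine ⟨N₁ + N₂, X 0 ^ N₂ * q₁ + X 0 ^ N₁ * q₂,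
      add_mem (mul_mem (pow_mem X_zero_mem _) hq₁) (mul_mem (pow_mem X_zero_mem _) hq₂), ?_⟩
    intro x hx
    simp only [map_add, map_mul, map_pow, eval_X, ← e₁ x hx, ← e₂ x hx]
    ring
  | mul_X p i h =>
    obtain ⟨N, q, hq, e⟩ := h
    have hi : ∃ r ∈ invAlg, ∀ x : Fin 5 → ℂ, x 0 ≠ 0 → x 0 ^ 3 * slicePt x i = eval x r := by
      fin_cases i
      · exact ⟨X 0 ^ 4, pow_mem X_zero_mem _, fun x _ => by simp [slicePt]; ring⟩
      · exact ⟨0, zero_mem _, fun x _ => by simp [slicePt]⟩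
      · refine ⟨X 0 ^ 2 * genH, mul_mem (pow_mem X_zero_mem _) genH_mem, fun x hx => ?_⟩
        simp [slicePt]
        field_simp
      · refine ⟨C 2 * X 0 * genT, mul_mem (mul_mem (C_mem_invAlg _) X_zero_mem) genT_mem,
          fun x hx => ?_⟩
        simp [slicePt]
        field_simp
      · refine ⟨C 3 * X 0 ^ 2 * genI - C 3 * genH ^ 2,
          sub_mem (mul_mem (mul_mem (C_mem_invAlg _) (pow_mem X_zero_mem _)) genI_mem)
            (mul_mem (C_mem_invAlg _) (pow_mem genH_mem _)), fun x hx => ?_⟩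
        simp [slicePt]
        field_simp
    obtain ⟨r, hr, er⟩ := hi
    refine ⟨N + 3, q * r, mul_mem hq hr, fun x hx => ?_⟩
    simp only [map_mul, eval_X, ← e x hx, ← er x hx]
    ring

lemma exists_pow_mul_mem {p : Poly5} (hp : ∀ t : ℂ, sigma t p = p) :
    ∃ N : ℕ, X 0 ^ N * p ∈ invAlg := by
  obtain ⟨N, q, hq, e⟩ := exists_clear_denominators p
  refine ⟨N, ?_⟩
  have h : X 0 ^ N * p - q = 0 := by
    refine eq_zero_of_eval_ne _ fun x hx => ?_
    simp [← e x hx, eval_slicePt_of_invariant hp x hx]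
  rwa [sub_eq_zero.mp h]

/-- The syzygy among the five generators. -/
lemma syzygy : genT ^ 2 =
    X 0 * (C (3 / 4) * X 0 * genH * genI + C (1 / 4) * X 0 ^ 2 * genJ) - genH ^ 3 := by
  apply MvPolynomial.funext
  intro x
  simp [genH, genI, genT, genJ]
  ring

/-- Substitution of `H`, `I`, `J` into a polynomial in three variables. -/
noncomputable def substHIJ : MvPolynomial (Fin 3) ℂ →ₐ[ℂ] Poly5 := aeval ![genH, genI, genJ]

lemma substHIJ_mem (f : MvPolynomial (Fin 3) ℂ) : substHIJ f ∈ invAlg := by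
  induction f using MvPolynomial.induction_on with
  | C a => simpa [substHIJ] using C_mem_invAlg a
  | add p q hp hq => simpa using add_mem hp hq
  | mul_X p i hp =>
    rw [map_mul]
    refine mul_mem hp ?_
    fin_cases i
    · simpa [substHIJ] using genH_mem
    · simpa [substHIJ] using genI_mem
    · simpa [substHIJ] using genJ_mem

/-- Modulo `x₀ A`, the algebra `A` is spanned by `1` and `T` over `ℂ[H, I, J]`. -/
lemma exists_normal_form {q : Poly5} (hq : q ∈ invAlg) :
    ∃ a ∈ invAlg, ∃ f g : MvPolynomial (Fin 3) ℂ,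
      q = X 0 * a + substHIJ f + genT * substHIJ g := by
  induction hq using Algebra.adjoin_induction with
  | mem x hx =>
    simp only [Set.mem_insert_iff, Set.mem_singleton_iff] at hx
    rcases hx with rfl | rfl | rfl | rfl | rfl
    · exact ⟨1, one_mem _, 0, 0, by simp⟩
    · exact ⟨0, zero_mem _, X 0, 0, by simp [substHIJ]⟩
    · exact ⟨0, zero_mem _, X 1, 0, by simp [substHIJ]⟩
    · exact ⟨0, zero_mem _, 0, 1, by simp⟩
    · exact ⟨0, zero_mem _, X 2, 0, by simp [substHIJ]⟩
  | algebraMap r => exact ⟨0, zero_mem _, C r, 0, by simp [substHIJ, algebraMap_eq]⟩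
  | add x y _ _ hx hy =>
    obtain ⟨a, ha, f, g, rfl⟩ := hx
    obtain ⟨b, hb, f', g', rfl⟩ := hy
    exact ⟨a + b, add_mem ha hb, f + f', g + g', by simp only [map_add]; ring⟩
  | mul x y hxA hyA hx hy =>
    obtain ⟨a, ha, f, g, ex⟩ := hx
    obtain ⟨b, hb, f', g', ey⟩ := hy
    have hF := substHIJ_mem f
    have hG := substHIJ_mem g
    have hF' := substHIJ_mem f'
    have hG' := substHIJ_mem g'
    have hH : substHIJ (X 0) = genH := by simp [substHIJ]
    have hR : C (3 / 4) * X 0 * genH * genI + C (1 / 4) * X 0 ^ 2 * genJ ∈ invAlg :=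
      add_mem (mul_mem (mul_mem (mul_mem (C_mem_invAlg _) X_zero_mem) genH_mem) genI_mem)
        (mul_mem (mul_mem (C_mem_invAlg _) (pow_mem X_zero_mem _)) genJ_mem)
    refine ⟨a * y + (substHIJ f + genT * substHIJ g) * b
        + (C (3 / 4) * X 0 * genH * genI + C (1 / 4) * X 0 ^ 2 * genJ)
          * (substHIJ g * substHIJ g'),
      add_mem (add_mem (mul_mem ha hyA) (mul_mem (add_mem hF (mul_mem genT_mem hG)) hb))
        (mul_mem hR (mul_mem hG hG')),
      f * f' - X 0 ^ 3 * (g * g'), f * g' + g * f', ?_⟩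
    simp only [map_add, map_sub, map_mul, map_pow, hH]
    rw [ex, ey]
    linear_combination (substHIJ g * substHIJ g') * syzygy

lemma mem_of_X_zero_mul_mem {p : Poly5} (hp : X 0 * p ∈ invAlg) : p ∈ invAlg := by
  obtain ⟨a, ha, f, g, e⟩ := exists_normal_form hp
  -- The point `(0, s, 0, -3y₁/(4s), y₂/s²)` has `H = -s²`, `I = y₁`, `J = y₂`, `T = s³`.
  have key : ∀ (y : Fin 3 → ℂ) (s : ℂ), s ≠ 0 → s ^ 2 = -y 0 →
      eval y f + s ^ 3 * eval y g = 0 := by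
    intro y s hs hy
    have h := congrArg (eval ![0, s, 0, -(3 / 4) * y 1 / s, y 2 / s ^ 2]) e
    have hpt : (fun i => eval ![0, s, 0, -(3 / 4) * y 1 / s, y 2 / s ^ 2]
        ((![genH, genI, genJ] : Fin 3 → Poly5) i)) = y := by
      funext i
      fin_cases i
      · simp [genH, hy]
      · simp [genI]
        field_simp
      · simp [genJ]
        field_simp
    simp only [map_add, map_mul, substHIJ, eval_aeval_eq, hpt] at h
    simp [genT] at h
    exact h.symm
  have hfg : ∀ y : Fin 3 → ℂ, y 0 ≠ 0 → eval y f = 0 ∧ eval y g = 0 := by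
    intro y hy
    obtain ⟨s, hs⟩ := IsAlgClosed.exists_pow_nat_eq (-y 0) (n := 2) (by norm_num)
    have hs0 : s ≠ 0 := by
      rintro rfl
      exact hy (by simpa using hs.symm)
    have h₁ := key y s hs0 hs
    have h₂ := key y (-s) (neg_ne_zero.mpr hs0) (by simpa using hs)
    have hf : eval y f = 0 := by linear_combination (h₁ + h₂) / 2
    refine ⟨hf, ?_⟩
    rw [hf, zero_add] at h₁
    exact (mul_eq_zero.mp h₁).resolve_left (pow_ne_zero 3 hs0)
  have hf : f = 0 := eq_zero_of_eval_ne f fun y hy => (hfg y hy).1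
  have hg : g = 0 := eq_zero_of_eval_ne g fun y hy => (hfg y hy).2
  rw [hf, hg, map_zero, mul_zero, add_zero, add_zero] at e
  rwa [mul_left_cancel₀ (X_ne_zero 0) e]

lemma mem_of_pow_mul_mem (N : ℕ) {p : Poly5} (hp : X 0 ^ N * p ∈ invAlg) : p ∈ invAlg := by
  induction N with
  | zero => simpa using hp
  | succ n ih =>
    refine ih (mem_of_X_zero_mul_mem ?_)
    rwa [← mul_assoc, ← pow_succ']

/-- A polynomial `p ∈ ℂ[x₀,x₁,x₂,x₃,x₄]` is `σ`-invariant if and only if it lies in the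
`ℂ`-subalgebra generated by `x₀`, `x₀x₂ − x₁²`, `x₂² + (1/3)x₀x₄ − (4/3)x₁x₃`,
`x₁³ + (1/2)x₀²x₃ − (3/2)x₀x₁x₂` and `x₂³ − 2x₁x₂x₃ + x₀x₃² + x₁²x₄ − x₀x₂x₄`. -/
theorem invariant_iff_mem_adjoin (p : MvPolynomial (Fin 5) ℂ) :
    (∀ t : ℂ, sigma t p = p) ↔
      p ∈ Algebra.adjoin ℂ
        ({X 0,
          X 0 * X 2 - X 1 ^ 2,
          X 2 ^ 2 + C (1 / 3 : ℂ) * X 0 * X 4 - C (4 / 3 : ℂ) * X 1 * X 3,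
          X 1 ^ 3 + C (1 / 2 : ℂ) * X 0 ^ 2 * X 3 - C (3 / 2 : ℂ) * X 0 * X 1 * X 2,
          X 2 ^ 3 - C (2 : ℂ) * X 1 * X 2 * X 3 + X 0 * X 3 ^ 2 + X 1 ^ 2 * X 4
            - X 0 * X 2 * X 4} : Set (MvPolynomial (Fin 5) ℂ)) := by
  change _ ↔ p ∈ invAlg
  constructor
  · intro hp
    obtain ⟨N, hN⟩ := exists_pow_mul_mem hp
    exact mem_of_pow_mul_mem N hN
  · exact fun hp t => sigma_eq_of_mem hp t
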